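/- Let X be a log-concave real random variable with mean 0 and variance γ². Then for every s ≥ γ, P(|X| ≥ s) ≤ e^{-s/(2γ)}. -/

import Mathlib

open MeasureTheory ProbabilityTheory Real

/-- A real random variable (given by its law) is log-concave if its law has a
log-concave density with respect to Lebesgue measure. -/
def IsLogConcaveLaw (μ : MeasureTheory.Measure ℝ) : Prop :=
  ∃ ρ : ℝ → ℝ, (∀ x, 0 ≤ ρ x) ∧
    μ = MeasureTheory.volume.withDensity (fun x => ENNReal.ofReal (ρ x)) ∧
    ∀ x y : ℝ, ∀ l : ℝ, 0 < l → l < 1 →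
      ρ x ^ l * ρ y ^ (1 - l) ≤ ρ (l * x + (1 - l) * y)


/-- normalised log-concave densities -/
structure LCD (ρ : ℝ → ℝ) : Prop where
  nn : ∀ x, 0 ≤ ρ x
  lc : ∀ x y : ℝ, ∀ l : ℝ, 0 < l → l < 1 →
      ρ x ^ l * ρ y ^ (1 - l) ≤ ρ (l * x + (1 - l) * y)
  int0 : Integrable ρ
  int1 : Integrable (fun x => x * ρ x)
  int2 : Integrable (fun x => x ^ 2 * ρ x)
  one : ∫ x, ρ x = 1
  mean : ∫ x, x * ρ x = 0
  var : ∫ x, x ^ 2 * ρ x = 1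

noncomputable def tl (ρ : ℝ → ℝ) (t : ℝ) : ℝ := ∫ x in Set.Ioi t, ρ x

lemma LCD.refl {ρ : ℝ → ℝ} (h : LCD ρ) : LCD (fun x => ρ (-x)) where
  nn x := h.nn _
  lc x y l h0 h1 := by
    have := h.lc (-x) (-y) l h0 h1
    have e : -(l * x + (1 - l) * y) = l * -x + (1 - l) * -y := by ring
    simpa only [e] using this
  int0 := h.int0.comp_neg
  int1 := by
    have := h.int1.comp_neg.neg
    refine this.congr (Filter.Eventually.of_forall fun x => ?_)
    simp
  int2 := by
    have := h.int2.comp_neg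
    refine this.congr (Filter.Eventually.of_forall fun x => ?_)
    simp
  one := by rw [integral_neg_eq_self (f := ρ)]; exact h.one
  mean := by
    have := integral_neg_eq_self (fun x => x * ρ x) volume
    rw [h.mean] at this
    simp only [neg_mul, integral_neg] at this
    linarith
  var := by
    have := integral_neg_eq_self (fun x => x ^ 2 * ρ x) volume
    rw [h.var] at this
    simpa using this

lemma exp_geom (A k x z l : ℝ) (hA : 0 < A) :
    (A * exp (k * x)) ^ l * (A * exp (k * z)) ^ (1 - l) = A * exp (k * (l * x + (1 - l) * z)) := by
  rw [mul_rpow hA.le (exp_pos _).le, mul_rpow hA.le (exp_pos _).le, ← exp_mul, ← exp_mul]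
  have : A ^ l * A ^ (1 - l) = A := by rw [← rpow_add hA]; simp
  calc _ = (A ^ l * A ^ (1 - l)) * (exp (k * x * l) * exp (k * z * (1 - l))) := by ring
    _ = _ := by rw [this, ← exp_add]; congr 2; ring

lemma mid_exists {x y z : ℝ} (hxy : x < y) (hyz : y < z) :
    ∃ l : ℝ, 0 < l ∧ l < 1 ∧ y = l * x + (1 - l) * z := by
  have h : 0 < z - x := by linarith
  refine ⟨(z - y) / (z - x), div_pos (by linarith) h, ?_, ?_⟩
  · rw [div_lt_one h]; linarith
  · field_simp; ring

lemma LCD.cross {ρ : ℝ → ℝ} (h : LCD ρ) {A k x y z : ℝ} (hA : 0 < A) (hxy : x < y) (hyz : y < z)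
    (hx : A * exp (k * x) ≤ ρ x) (hz : A * exp (k * z) ≤ ρ z) : A * exp (k * y) ≤ ρ y := by
  obtain ⟨l, h0, h1, rfl⟩ := mid_exists hxy hyz
  refine le_trans ?_ (h.lc x z l h0 h1)
  rw [← exp_geom A k x z l hA]
  have a1 : (A * exp (k * x)) ^ l ≤ ρ x ^ l := rpow_le_rpow (by positivity) hx h0.le
  have a2 : (A * exp (k * z)) ^ (1 - l) ≤ ρ z ^ (1 - l) :=
    rpow_le_rpow (by positivity) hz (by linarith)
  exact mul_le_mul a1 a2 (by positivity) (rpow_nonneg (h.nn x) _)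

lemma LCD.cross_lt {ρ : ℝ → ℝ} (h : LCD ρ) {A k x y z : ℝ} (hA : 0 < A) (hxy : x < y) (hyz : y < z)
    (hx : A * exp (k * x) < ρ x) (hz : A * exp (k * z) ≤ ρ z) : A * exp (k * y) < ρ y := by
  obtain ⟨l, h0, h1, rfl⟩ := mid_exists hxy hyz
  refine lt_of_lt_of_le ?_ (h.lc x z l h0 h1)
  rw [← exp_geom A k x z l hA]
  have a1 : (A * exp (k * x)) ^ l < ρ x ^ l := rpow_lt_rpow (by positivity) hx h0
  have a2 : (A * exp (k * z)) ^ (1 - l) ≤ ρ z ^ (1 - l) :=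
    rpow_le_rpow (by positivity) hz (by linarith)
  have a3 : 0 < (A * exp (k * z)) ^ (1 - l) := by positivity
  have a4 : 0 ≤ ρ x ^ l := rpow_nonneg (h.nn x) _
  calc _ < ρ x ^ l * (A * exp (k * z)) ^ (1 - l) := by gcongr
    _ ≤ _ := by gcongr

lemma LCD.pos_mid {ρ : ℝ → ℝ} (h : LCD ρ) {x y z : ℝ} (hxy : x < y) (hyz : y < z)
    (hx : 0 < ρ x) (hz : 0 < ρ z) : 0 < ρ y := by
  obtain ⟨l, h0, h1, rfl⟩ := mid_exists hxy hyz
  refine lt_of_lt_of_le ?_ (h.lc x z l h0 h1)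
  positivity

lemma exp_tail {k : ℝ} (hk : 0 < k) (A t : ℝ) :
    IntegrableOn (fun x => A * exp (-k * x)) (Set.Ioi t) ∧
    ∫ x in Set.Ioi t, A * exp (-k * x) = A / k * exp (-k * t) := by
  have := integral_exp_mul_Ioi (a := -k) (by linarith) t
  refine ⟨(integrableOn_exp_mul_Ioi (by linarith) t).const_mul A, ?_⟩
  rw [integral_const_mul, this]
  field_simp

/-- tangent bound for the logarithm of the tail -/
lemma LCD.tangent {ρ : ℝ → ℝ} (h : LCD ρ) (z : ℝ) (hz : 0 < ρ z) (hG : 0 < tl ρ z) (t : ℝ) :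
    tl ρ t ≤ tl ρ z * exp (-(ρ z / tl ρ z) * (t - z)) := by
  set k := ρ z / tl ρ z with hk
  have kpos : 0 < k := by positivity
  set A := ρ z * exp (k * z) with hAdef
  have hA : 0 < A := by positivity
  have gz : A * exp (-k * z) = ρ z := by
    rw [hAdef, mul_assoc, ← exp_add]; simp
  have gt : ∀ t, A / k * exp (-k * t) = tl ρ z * exp (-k * (t - z)) := by
    intro t
    have : A / k = tl ρ z * exp (k * z) := by rw [hAdef, hk]; field_simp
    rw [this, mul_assoc, ← exp_add]; congr 2; ring
  have hI : ∀ t, ∫ x in Set.Ioi t, A * exp (-k * x) = tl ρ z * exp (-k * (t - z)) := by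
    intro t; rw [(exp_tail kpos A t).2, gt]
  have hIz : ∫ x in Set.Ioi z, A * exp (-k * x) = tl ρ z := by rw [hI]; simp
  rw [← hI]
  by_contra hcon
  push Not at hcon
  have split : ∀ (f : ℝ → ℝ) (a b : ℝ), a ≤ b → IntegrableOn f (Set.Ioi a) →
      ∫ x in Set.Ioi a, f x = (∫ x in Set.Ioc a b, f x) + ∫ x in Set.Ioi b, f x := by
    intro f a b hab hf
    rw [← setIntegral_union (Set.Ioc_disjoint_Ioi le_rfl) measurableSet_Ioi
      (hf.mono_set Set.Ioc_subset_Ioi_self) (hf.mono_set (Set.Ioi_subset_Ioi hab)),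
      Set.Ioc_union_Ioi_eq_Ioi hab]
  have iR : ∀ s : Set ℝ, IntegrableOn ρ s := fun s => h.int0.integrableOn
  have iG : ∀ t, IntegrableOn (fun x => A * exp (-k * x)) (Set.Ioi t) := fun t => (exp_tail kpos A t).1
  rcases lt_trichotomy t z with htz | rfl | htz
  · have s1 := split ρ t z htz.le (iR _)
    have s2 := split _ t z htz.le (iG t)
    have hlt : ∫ x in Set.Ioc t z, A * exp (-k * x) < ∫ x in Set.Ioc t z, ρ x := by
      rw [hIz] at s2
      unfold tl at *
      linarith
    have : ∃ a ∈ Set.Ioc t z, A * exp (-k * a) < ρ a := by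
      by_contra hno
      push Not at hno
      exact absurd (setIntegral_mono_on (iR _) ((iG t).mono_set Set.Ioc_subset_Ioi_self)
        measurableSet_Ioc hno) (not_le.2 hlt)
    obtain ⟨a, ha, hra⟩ := this
    have haz : a < z := lt_of_le_of_ne ha.2 (by rintro rfl; rw [gz] at hra; exact lt_irrefl _ hra)
    have hs : ∀ s, z < s → ρ s < A * exp (-k * s) := by
      intro s hs
      by_contra hno
      have := h.cross_lt hA haz hs hra (not_lt.1 hno)
      rw [gz] at this
      exact lt_irrefl _ this
    have hz0 : ∫ x in Set.Ioi z, (A * exp (-k * x) - ρ x) = 0 := by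
      rw [integral_sub (iG z) (iR _), hIz]; simp [tl]
    rw [setIntegral_eq_zero_iff_of_nonneg_ae] at hz0
    · have hpos : ∀ᵐ x ∂(volume.restrict (Set.Ioi z)), x ∈ Set.Ioi z :=
        ae_restrict_mem measurableSet_Ioi
      have hF : ∀ᵐ x ∂(volume.restrict (Set.Ioi z)), False := by
        filter_upwards [hz0, hpos] with x h1 h2
        have := hs x h2
        simp at h1
        simp at this
        linarith
      have := Filter.eventually_false_iff_eq_bot.1 hF
      rw [ae_eq_bot, Measure.restrict_eq_zero] at this
      simp at this
    · filter_upwards [ae_restrict_mem measurableSet_Ioi] with x hx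
      have := hs x hx
      simp at this ⊢
      linarith
    · exact (iG z).sub (iR _)
  · rw [hIz] at hcon; exact lt_irrefl _ hcon
  · have s1 := split ρ z t htz.le (iR _)
    have s2 := split _ z t htz.le (iG z)
    have hlt : ∫ x in Set.Ioc z t, ρ x < ∫ x in Set.Ioc z t, A * exp (-k * x) := by
      rw [hIz] at s2
      unfold tl at *
      linarith
    have : ∃ a ∈ Set.Ioc z t, ρ a < A * exp (-k * a) := by
      by_contra hno
      push Not at hno
      exact absurd (setIntegral_mono_on ((iG z).mono_set Set.Ioc_subset_Ioi_self) (iR _)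
        measurableSet_Ioc hno) (not_le.2 hlt)
    obtain ⟨a, ha, hra⟩ := this
    have : ∃ b ∈ Set.Ioi t, A * exp (-k * b) < ρ b := by
      by_contra hno
      push Not at hno
      exact absurd (setIntegral_mono_on (iR _) (iG t) measurableSet_Ioi hno) (not_le.2 hcon)
    obtain ⟨b, hb, hrb⟩ := this
    have := h.cross hA ha.1 (lt_of_le_of_lt ha.2 hb) gz.le hrb.le
    linarith

lemma LCD.tl_zero_pos {ρ : ℝ → ℝ} (h : LCD ρ) : 0 < tl ρ 0 := by
  have h0 : 0 ≤ tl ρ 0 := setIntegral_nonneg measurableSet_Ioi fun x _ => h.nn x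
  refine lt_of_le_of_ne h0 fun he => ?_
  have h1 : ρ =ᵐ[volume.restrict (Set.Ioi 0)] 0 :=
    (setIntegral_eq_zero_iff_of_nonneg_ae (Filter.Eventually.of_forall h.nn)
      h.int0.integrableOn).1 he.symm
  have h2 : ∀ᵐ x : ℝ, x ∈ Set.Ioi (0:ℝ) → ρ x = 0 := (ae_restrict_iff' measurableSet_Ioi).1 h1
  have h3 : ∫ x, (-fun x => x * ρ x) x = 0 := by
    simp only [Pi.neg_apply]
    rw [integral_neg, h.mean]; simp
  rw [integral_eq_zero_iff_of_nonneg_ae _ h.int1.neg] at h3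
  · have h4 : ∀ᵐ x : ℝ, x ≠ 0 := by simp [ae_iff]
    have : ρ =ᵐ[volume] 0 := by
      filter_upwards [h3, h4] with x a b
      simpa [b] using a
    have := integral_congr_ae this
    rw [h.one] at this
    simp at this
  · filter_upwards [h2] with x hx
    by_cases hx0 : 0 < x
    · simp [hx hx0]
    · have := h.nn x
      simp
      nlinarith

lemma LCD.exists_pos {ρ : ℝ → ℝ} (t : ℝ) (hG : 0 < tl ρ t) :
    ∃ x, t < x ∧ 0 < ρ x := by
  by_contra hno
  push Not at hno
  exact absurd (setIntegral_nonpos measurableSet_Ioi fun x hx => hno x hx) (not_le.2 hG)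

lemma LCD.pos_of_tail {ρ : ℝ → ℝ} (h : LCD ρ) (z : ℝ) (hz : 0 ≤ z) (hG : 0 < tl ρ z) : 0 < ρ z := by
  obtain ⟨x, hx, hx'⟩ := LCD.exists_pos z hG
  obtain ⟨y, hy, hy'⟩ := LCD.exists_pos 0 h.refl.tl_zero_pos
  exact h.pos_mid (by linarith) hx hy' hx'

lemma LCD.tl_add {ρ : ℝ → ℝ} (h : LCD ρ) : tl ρ 0 + tl (fun x => ρ (-x)) 0 = 1 := by
  have := integral_comp_neg_Ioi 0 ρ
  unfold tl
  rw [this, ← h.one, neg_zero, add_comm, ← Set.compl_Iic]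
  exact integral_add_compl measurableSet_Iic h.int0

lemma LCD.grunbaum {ρ : ℝ → ℝ} (h : LCD ρ) : 1 / 3 ≤ tl ρ 0 := by
  have hp := h.tl_zero_pos
  have hr := h.pos_of_tail 0 le_rfl hp
  set p := tl ρ 0 with hpdef
  set k := ρ 0 / p with hk
  have kpos : 0 < k := by positivity
  set b := log p with hb
  have htan := h.tangent 0 hr hp
  let ν : Measure ℝ := volume.withDensity (fun x => ENNReal.ofReal (ρ x))
  have hm : AEMeasurable (fun x => ENNReal.ofReal (ρ x)) volume := h.int0.aemeasurable.ennreal_ofReal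
  let f : ℝ → ℝ := fun x => max (k * x - b) 0
  have fm : Measurable f := by fun_prop
  have L := lintegral_eq_lintegral_meas_lt ν (f := f)
    (Filter.Eventually.of_forall fun x => le_max_right _ _) fm.aemeasurable
  have e1 : ∫⁻ t in Set.Ioi (0:ℝ), ν {a | t < f a} ≤ ∫⁻ t in Set.Ioi (0:ℝ), ENNReal.ofReal (exp (-t)) := by
    refine setLIntegral_mono (by fun_prop) fun t ht => ?_
    have : {a | t < f a} = Set.Ioi ((t + b) / k) := by
      ext a
      have ht' : 0 < t := ht
      simp only [f, Set.mem_ofPred_eq, lt_max_iff, Set.mem_Ioi, div_lt_iff₀ kpos]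
      constructor
      · rintro (h | h) <;> linarith
      · intro h; left; linarith
    rw [this, withDensity_apply _ measurableSet_Ioi,
      ← ofReal_integral_eq_lintegral_ofReal h.int0.integrableOn (Filter.Eventually.of_forall h.nn)]
    apply ENNReal.ofReal_le_ofReal
    refine (htan ((t + b) / k)).trans_eq ?_
    rw [← hpdef, ← hk]
    have : -k * ((t + b) / k - 0) = - t + - b := by field_simp; ring
    rw [this, exp_add, exp_neg b, hb, exp_log hp]
    field_simp
  have e2 : ∫⁻ t in Set.Ioi (0:ℝ), ENNReal.ofReal (exp (-t)) = 1 := by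
    rw [← ofReal_integral_eq_lintegral_ofReal (integrableOn_exp_neg_Ioi 0)
      (Filter.Eventually.of_forall fun x => (exp_pos _).le), integral_exp_neg_Ioi]
    simp
  have ilin : Integrable (fun x => (k * x - b) * ρ x) := by
    refine ((h.int1.const_mul k).sub (h.int0.const_mul b)).congr
      (Filter.Eventually.of_forall fun x => ?_)
    simp; ring
  have fi : Integrable (fun x => ρ x * f x) := by
    refine ilin.pos_part.congr (Filter.Eventually.of_forall fun x => ?_)
    simp only [f]
    rw [mul_max_of_nonneg _ _ (h.nn x)]
    simp [mul_comm]
  have e3 : ENNReal.ofReal (∫ x, ρ x * f x) ≤ 1 := by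
    rw [ofReal_integral_eq_lintegral_ofReal fi (Filter.Eventually.of_forall fun x =>
      mul_nonneg (h.nn x) (le_max_right _ _))]
    rw [lintegral_withDensity_eq_lintegral_mul₀ hm (by fun_prop)] at L
    calc _ = _ := by
            refine (lintegral_congr fun x => ?_).trans L
            simp [ENNReal.ofReal_mul (h.nn x)]
      _ ≤ 1 := e1.trans e2.le
  have e4 : ∫ x, ρ x * f x ≤ 1 := by
    simpa using e3
  have e5 : ∫ x, (k * x - b) * ρ x = -b := by
    have : (fun x => (k * x - b) * ρ x) = fun x => k * (x * ρ x) - b * ρ x := by ext; ring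
    rw [this, integral_sub (h.int1.const_mul k) (h.int0.const_mul b), integral_const_mul,
      integral_const_mul, h.mean, h.one]; ring
  have e6 : ∫ x, (k * x - b) * ρ x ≤ ∫ x, ρ x * f x := by
    refine integral_mono ilin fi fun x => ?_
    simp only [f]
    rw [mul_comm]
    exact mul_le_mul_of_nonneg_left (le_max_left _ _) (h.nn x)
  have e7 : -1 ≤ log p := by linarith
  have e8 : exp (-1) ≤ p := by rwa [← le_log_iff_exp_le hp]
  have e9 : (1:ℝ) / 3 ≤ exp (-1) := by
    rw [exp_neg, one_div]
    have := Real.exp_one_lt_d9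
    gcongr; linarith
  linarith

lemma LCD.tl_nonneg {ρ : ℝ → ℝ} (h : LCD ρ) (t : ℝ) : 0 ≤ tl ρ t :=
  setIntegral_nonneg measurableSet_Ioi fun x _ => h.nn x

lemma LCD.large {ρ : ℝ → ℝ} (h : LCD ρ) {u : ℝ} (hu : 8 ≤ u) :
    tl ρ u ≤ tl ρ 0 * exp (-(u / 2)) := by
  by_contra hcon
  push Not at hcon
  have hp := h.grunbaum
  have hu0 : 0 < tl ρ u := lt_trans (by positivity) hcon
  have key : ∀ z, 0 ≤ z → z ≤ u → tl ρ 0 * exp (-(z / 2)) ≤ tl ρ z := by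
    intro z hz hzu
    have hmono : tl ρ u ≤ tl ρ z :=
      setIntegral_mono_set h.int0.integrableOn (Filter.Eventually.of_forall h.nn)
        (Filter.Eventually.of_forall (Set.Ioi_subset_Ioi hzu))
    have hG : 0 < tl ρ z := lt_of_lt_of_le hu0 hmono
    have hr := h.pos_of_tail z hz hG
    have t1 := h.tangent z hr hG 0
    have t2 := h.tangent z hr hG u
    set k := ρ z / tl ρ z
    rcases le_total k (1 / 2) with hk | hk
    · have : tl ρ 0 * exp (-(z / 2)) ≤ tl ρ z * exp (-k * (0 - z)) * exp (-(z / 2)) := by gcongr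
      refine this.trans ?_
      rw [mul_assoc, ← exp_add]
      refine mul_le_of_le_one_right hG.le ?_
      rw [exp_le_one_iff]
      nlinarith
    · have e : exp (-(z / 2)) = exp (-(u / 2)) * exp ((u - z) / 2) := by
        rw [← exp_add]; congr 1; ring
      have : tl ρ 0 * exp (-(z / 2)) ≤ tl ρ z * exp (-k * (u - z)) * exp ((u - z) / 2) := by
        rw [e, ← mul_assoc]
        exact mul_le_mul_of_nonneg_right (hcon.le.trans t2) (exp_pos _).le
      refine this.trans ?_
      rw [mul_assoc, ← exp_add]
      refine mul_le_of_le_one_right hG.le ?_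
      rw [exp_le_one_iff]
      nlinarith
  have k3 := key 3 (by norm_num) (by linarith)
  have k6 := key 6 (by norm_num) (by linarith)
  have i3 : Integrable ((Set.Ioi (3:ℝ)).indicator ρ) := h.int0.indicator measurableSet_Ioi
  have i6 : Integrable ((Set.Ioi (6:ℝ)).indicator ρ) := h.int0.indicator measurableSet_Ioi
  have hle : 9 * tl ρ 3 + 27 * tl ρ 6 ≤ 1 := by
    rw [← h.var]
    unfold tl
    rw [← integral_indicator measurableSet_Ioi, ← integral_indicator measurableSet_Ioi,
      ← integral_const_mul, ← integral_const_mul, ← integral_add (i3.const_mul _) (i6.const_mul _)]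
    refine integral_mono ((i3.const_mul _).add (i6.const_mul _)) h.int2 fun x => ?_
    have := h.nn x
    simp only [Set.indicator, Set.mem_Ioi]
    split_ifs with a b
    · nlinarith [mul_nonneg this (by nlinarith : 0 ≤ x ^ 2 - 36)]
    · nlinarith [mul_nonneg this (by nlinarith : 0 ≤ x ^ 2 - 9)]
    · linarith
    · nlinarith [mul_nonneg this (sq_nonneg x)]
  have n : (0.22:ℝ) ≤ exp (-(3 / 2)) := by
    have e : exp (-(3 / 2 : ℝ)) ^ 2 = (exp 1 ^ 3)⁻¹ := by
      rw [← exp_nat_mul, ← exp_nat_mul, ← exp_neg]; norm_num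
    have h1 : exp 1 ^ 3 ≤ 2.7182818286 ^ 3 := by
      gcongr; exact Real.exp_one_lt_d9.le
    have h2 : ((2.7182818286:ℝ) ^ 3)⁻¹ ≤ (exp 1 ^ 3)⁻¹ := by gcongr
    rw [← e] at h2
    refine le_of_sq_le_sq ?_ (exp_pos _).le
    refine le_trans ?_ h2
    norm_num
  have n2 : exp (-(6 / 2:ℝ)) = exp (-(3 / 2)) ^ 2 := by rw [← exp_nat_mul]; norm_num
  rw [n2] at k6
  have n3 : (0.22:ℝ) ^ 2 ≤ exp (-(3 / 2)) ^ 2 := by gcongr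
  nlinarith [mul_le_mul hp n (by norm_num) (by linarith), mul_le_mul hp n3 (by norm_num) (by linarith)]

lemma LCD.support {ρ : ℝ → ℝ} (h : LCD ρ) : ∃ α : ℝ, ∀ x, ρ x ≤ ρ 0 * exp (α * x) := by
  have hr := h.pos_of_tail 0 le_rfl h.tl_zero_pos
  obtain ⟨x₁, hx₁, px₁⟩ := LCD.exists_pos 0 h.tl_zero_pos
  obtain ⟨y₁, hy₁, py₁⟩ := LCD.exists_pos 0 h.refl.tl_zero_pos
  let S : Set ℝ := {s | ∃ x, 0 < x ∧ ρ x = ρ 0 * exp (s * x)}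
  have slope : ∀ x, x ≠ 0 → 0 < ρ x → ρ x = ρ 0 * exp (log (ρ x / ρ 0) / x * x) := by
    intro x hx hp
    rw [div_mul_cancel₀ _ hx, exp_log (by positivity)]
    field_simp
  have hne : S.Nonempty := ⟨_, x₁, hx₁, slope x₁ hx₁.ne' px₁⟩
  have hub : ∀ y, y < 0 → 0 < ρ y → ∀ s ∈ S, s ≤ log (ρ y / ρ 0) / y := by
    rintro y hy py s ⟨x, hx, hs⟩
    by_contra hno
    push Not at hno
    have := slope y hy.ne py
    have hlt : ρ 0 * exp (s * y) < ρ y := by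
      rw [this]
      gcongr 2
      exact (mul_lt_mul_right_of_neg hy).2 hno
    have := h.cross_lt hr hy hx hlt hs.ge
    simp at this
  have hbdd : BddAbove S := ⟨_, fun s hs => hub (-y₁) (by linarith) py₁ s hs⟩
  refine ⟨sSup S, fun x => ?_⟩
  rcases (h.nn x).eq_or_lt with h0 | h0
  · rw [← h0]; positivity
  rcases lt_trichotomy x 0 with hx | rfl | hx
  · have := csSup_le hne (hub x hx h0)
    calc ρ x = _ := slope x hx.ne h0
      _ ≤ _ := by
        gcongr 2
        exact (mul_le_mul_right_of_neg hx).2 this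
  · simp
  · have := le_csSup hbdd ⟨x, hx, slope x hx.ne' h0⟩
    calc ρ x = _ := slope x hx.ne' h0
      _ ≤ _ := by gcongr

lemma exp_num1 : exp 1.32 ≤ 3.75 := by
  have e : exp 1.32 = exp 1 * exp 0.32 := by rw [← exp_add]; norm_num
  have h1 := Real.exp_one_lt_d9
  have h2 := Real.exp_bound' (x := 0.32) (by norm_num) (by norm_num) (n := 5) (by norm_num)
  norm_num [Finset.sum_range_succ, Nat.factorial] at h2
  rw [e]
  calc _ ≤ (2.7182818286:ℝ) * 1.3773 := by
        gcongr
        norm_num at h2 ⊢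
        linarith
    _ ≤ _ := by norm_num

lemma exp_num2 : exp (-1.86) ≤ 0.157 := by
  have e : exp (-1.86) = (exp 1)⁻¹ * (exp 1)⁻¹ * exp 0.14 := by
    rw [← exp_neg, ← exp_add, ← exp_add]; norm_num
  have h1 := Real.exp_one_gt_d9
  have h2 := Real.exp_bound' (x := 0.14) (by norm_num) (by norm_num) (n := 4) (by norm_num)
  norm_num [Finset.sum_range_succ, Nat.factorial] at h2
  have h3 : (exp 1)⁻¹ ≤ (2.7182818283:ℝ)⁻¹ := by gcongr
  rw [e]
  calc _ ≤ (2.7182818283:ℝ)⁻¹ * (2.7182818283:ℝ)⁻¹ * 1.1504 := by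
        gcongr
        norm_num at h2 ⊢
        linarith
    _ ≤ _ := by norm_num

lemma par_integral (w d : ℝ) : ∫ x in (-d - w)..(-d + w), (w ^ 2 - (x + d) ^ 2) = 4 * w ^ 3 / 3 := by
  have : ∀ x ∈ Set.uIcc (-d - w) (-d + w),
      HasDerivAt (fun x => w ^ 2 * x - (x + d) ^ 3 / 3) (w ^ 2 - (x + d) ^ 2) x := by
    intro x _
    have h1 : HasDerivAt (fun x : ℝ => x + d) 1 x := (hasDerivAt_id x).add_const d
    have h2 := ((hasDerivAt_id x).const_mul (w ^ 2)).sub ((h1.pow 3).div_const 3)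
    refine (h2.congr_deriv ?_)
    simp
  rw [intervalIntegral.integral_eq_sub_of_hasDerivAt this
    (by apply Continuous.intervalIntegrable; fun_prop)]
  ring

lemma par_exp_integral (w d β : ℝ) (hβ : 0 < β) :
    ∫ x in (-d - w)..(-d + w), (w ^ 2 - (x + d) ^ 2) * exp (β * x) =
      exp (β * (-d + w)) * (2 * w / β ^ 2 - 2 / β ^ 3)
        + exp (β * (-d - w)) * (2 * w / β ^ 2 + 2 / β ^ 3) := by
  have : ∀ x ∈ Set.uIcc (-d - w) (-d + w),
      HasDerivAt (fun x => ((w ^ 2 - (x + d) ^ 2) / β + 2 * (x + d) / β ^ 2 - 2 / β ^ 3) * exp (β * x))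
        ((w ^ 2 - (x + d) ^ 2) * exp (β * x)) x := by
    intro x _
    have h1 : HasDerivAt (fun x : ℝ => x + d) 1 x := (hasDerivAt_id x).add_const d
    have h2 : HasDerivAt (fun x : ℝ => exp (β * x)) (exp (β * x) * (β * 1)) x :=
      ((hasDerivAt_id x).const_mul β).exp
    have h3 := (((((h1.pow 2).const_sub (w ^ 2)).div_const β).add
      ((h1.const_mul 2).div_const (β ^ 2))).sub_const (2 / β ^ 3)).mul h2
    refine (h3.congr_deriv ?_)
    simp
    field_simp
    try ring
  rw [intervalIntegral.integral_eq_sub_of_hasDerivAt this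
    (by apply Continuous.intervalIntegrable; fun_prop)]
  ring

lemma LCD.low_aux {ρ : ℝ → ℝ} (h : LCD ρ) {α : ℝ} (hα0 : 0 ≤ α)
    (hα : ∀ x, ρ x ≤ ρ 0 * exp (α * x)) : 0.27 ≤ ρ 0 := by
  have hr := h.pos_of_tail 0 le_rfl h.tl_zero_pos
  set r := ρ 0 with hrdef
  have hα3 : α ≤ 3 * r := by
    rcases hα0.eq_or_lt with h0 | h0
    · rw [← h0]; positivity
    have hq := h.refl.grunbaum
    have hq2 : tl (fun x => ρ (-x)) 0 ≤ r / α := by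
      have := exp_tail h0 r 0
      unfold tl
      calc _ ≤ ∫ x in Set.Ioi 0, r * exp (-α * x) := by
            refine setIntegral_mono_on h.refl.int0.integrableOn this.1 measurableSet_Ioi fun x _ => ?_
            simpa using hα (-x)
        _ = _ := by rw [this.2]; simp
    have := hq.trans hq2
    rw [le_div_iff₀ h0] at this
    linarith
  set θ := α / (3 * r) with hθ
  have hθ0 : 0 ≤ θ := by positivity
  have hθ1 : θ ≤ 1 := by rw [hθ, div_le_one (by positivity)]; exact hα3
  have hconv : ∀ x, exp (α * x) ≤ (1 - θ) + θ * exp (3 * r * x) := by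
    intro x
    have := convexOn_exp.2 (Set.mem_univ 0) (Set.mem_univ (3 * r * x))
      (by linarith : 0 ≤ 1 - θ) hθ0 (by ring)
    simp only [smul_eq_mul, mul_zero, zero_add, exp_zero, mul_one] at this
    have e : θ * (3 * r * x) = α * x := by rw [hθ]; field_simp
    rwa [e] at this
  set w := 0.53 / r with hw
  set d := 0.09 / r with hd
  have wpos : 0 < w := by positivity
  have hab : -d - w ≤ -d + w := by linarith
  let ψ : ℝ → ℝ := fun x => r * (1 - θ) * (w ^ 2 - (x + d) ^ 2)
    + r * θ * ((w ^ 2 - (x + d) ^ 2) * exp (3 * r * x))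
  have ψc : Continuous ψ := by fun_prop
  have iψ : Integrable ((Set.Ioc (-d - w) (-d + w)).indicator ψ) := by
    rw [integrable_indicator_iff measurableSet_Ioc]
    exact (ψc.integrableOn_Icc).mono_set Set.Ioc_subset_Icc_self
  have il : Integrable (fun x => (w ^ 2 - d ^ 2) * ρ x - 2 * d * (x * ρ x) - x ^ 2 * ρ x) :=
    ((h.int0.const_mul _).sub (h.int1.const_mul _)).sub h.int2
  have hl : ∫ x, ((w ^ 2 - d ^ 2) * ρ x - 2 * d * (x * ρ x) - x ^ 2 * ρ x) = w ^ 2 - d ^ 2 - 1 := by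
    have i1 : Integrable (fun x => (w ^ 2 - d ^ 2) * ρ x - 2 * d * (x * ρ x)) :=
      (h.int0.const_mul _).sub (h.int1.const_mul _)
    rw [integral_sub i1 h.int2,
      integral_sub (h.int0.const_mul _) (h.int1.const_mul _), integral_const_mul,
      integral_const_mul, h.one, h.mean, h.var]; ring
  have hm : w ^ 2 - d ^ 2 - 1 ≤ ∫ x in (-d - w)..(-d + w), ψ x := by
    rw [← hl, intervalIntegral.integral_of_le hab, ← integral_indicator measurableSet_Ioc]
    refine integral_mono il iψ fun x => ?_
    have hx := h.nn x
    have e : (w ^ 2 - d ^ 2) * ρ x - 2 * d * (x * ρ x) - x ^ 2 * ρ x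
        = (w ^ 2 - (x + d) ^ 2) * ρ x := by ring
    simp only [Set.indicator]
    rw [e]
    split_ifs with hmem
    · have hφ : 0 ≤ w ^ 2 - (x + d) ^ 2 := by nlinarith [hmem.1, hmem.2]
      calc _ ≤ (w ^ 2 - (x + d) ^ 2) * (r * ((1 - θ) + θ * exp (3 * r * x))) := by
            gcongr
            exact (hα x).trans (by gcongr; exact hconv x)
        _ = ψ x := by simp only [ψ]; ring
    · have hφ : w ^ 2 - (x + d) ^ 2 ≤ 0 := by
        simp only [Set.mem_Ioc, not_and_or, not_lt, not_le] at hmem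
        rcases hmem with hm | hm <;> nlinarith
      exact mul_nonpos_of_nonpos_of_nonneg hφ hx
  have hψ : ∫ x in (-d - w)..(-d + w), ψ x ≤ 0.1986 / r ^ 2 := by
    simp only [ψ]
    rw [intervalIntegral.integral_add (by apply Continuous.intervalIntegrable; fun_prop)
      (by apply Continuous.intervalIntegrable; fun_prop), intervalIntegral.integral_const_mul,
      intervalIntegral.integral_const_mul, par_integral, par_exp_integral _ _ _ (by positivity)]
    have e1 : 3 * r * (-d + w) = 1.32 := by rw [hw, hd]; field_simp; norm_num
    have e2 : 3 * r * (-d - w) = -1.86 := by rw [hw, hd]; field_simp; norm_num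
    have e3 : 2 * w / (3 * r) ^ 2 - 2 / (3 * r) ^ 3 = (1.18 / 27) / r ^ 3 := by
      rw [hw]; field_simp; norm_num
    have e4 : 2 * w / (3 * r) ^ 2 + 2 / (3 * r) ^ 3 = (5.18 / 27) / r ^ 3 := by
      rw [hw]; field_simp; norm_num
    have e5 : 4 * w ^ 3 / 3 = (4 * 0.53 ^ 3 / 3) / r ^ 3 := by rw [hw]; field_simp
    rw [e1, e2, e3, e4, e5]
    have b : exp 1.32 * (1.18 / 27) + exp (-1.86) * (5.18 / 27) ≤ 0.1986 := by
      linarith [exp_num1, exp_num2]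
    have : r * (1 - θ) * ((4 * 0.53 ^ 3 / 3) / r ^ 3) + r * θ * (exp 1.32 * ((1.18 / 27) / r ^ 3) +
        exp (-1.86) * ((5.18 / 27) / r ^ 3)) = ((1 - θ) * (4 * 0.53 ^ 3 / 3)
          + θ * (exp 1.32 * (1.18 / 27) + exp (-1.86) * (5.18 / 27))) / r ^ 2 := by
      field_simp
    rw [this]
    gcongr
    nlinarith [mul_le_mul_of_nonneg_left b hθ0]
  have hfin := hm.trans hψ
  have e6 : w ^ 2 - d ^ 2 = 0.2728 / r ^ 2 := by rw [hw, hd]; field_simp; norm_num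
  rw [e6] at hfin
  have : 0.0742 / r ^ 2 ≤ 1 := by
    have : 0.0742 / r ^ 2 = 0.2728 / r ^ 2 - 0.1986 / r ^ 2 := by field_simp; norm_num
    linarith
  rw [div_le_one (by positivity)] at this
  nlinarith

lemma LCD.low {ρ : ℝ → ℝ} (h : LCD ρ) : 0.27 ≤ ρ 0 := by
  obtain ⟨α, hα⟩ := h.support
  rcases le_total 0 α with h0 | h0
  · exact h.low_aux h0 hα
  · have := h.refl.low_aux (α := -α) (by linarith) (fun x => by simpa using hα (-x))
    simpa using this

lemma exp_quad {s : ℝ} (hs : |s| ≤ 0.45) : exp s ≤ 1 + s + 0.6 * s ^ 2 := by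
  have := Real.exp_bound (x := s) (by linarith) (n := 3) (by norm_num)
  norm_num [Finset.sum_range_succ, Nat.factorial] at this
  have h2 := (abs_le.1 this).2
  have h3 : |s| ^ 3 ≤ 0.45 * s ^ 2 := by
    rw [← sq_abs]
    nlinarith [sq_nonneg |s|]
  nlinarith [sq_nonneg s]

lemma mid_num {p q r u : ℝ} (hpq : p + q = 1) (hp : 1 / 3 ≤ p) (hq : 1 / 3 ≤ q)
    (hr : 0.27 ≤ r) (hu1 : 1 ≤ u) (hu : u ≤ 1.5) :
    p * exp (-(r / p) * u) + q * exp (-(r / q) * u) ≤ exp (-(u / 2)) := by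
  obtain ⟨x, hx⟩ : ∃ x, x = p - 1 / 2 := ⟨_, rfl⟩
  have hx1 : |x| ≤ 1 / 6 := by rw [abs_le]; constructor <;> linarith
  have p0 : 0 < p := by linarith
  have q0 : 0 < q := by linarith
  have key : ∀ p x : ℝ, x = p - 1 / 2 → 1 / 3 ≤ p → |x| ≤ 1 / 6 →
      p * exp (-(r / p) * u) ≤ exp (-(0.54 * u)) *
        (p + 0.54 * u * x + 0.6 * (0.54 * u * x) ^ 2 / p) := by
    intro p x hx hp hx1
    have p0 : 0 < p := by linarith
    have e : exp (-(r / p) * u) ≤ exp (-(0.54 * u)) * exp (0.54 * u * x / p) := by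
      rw [← exp_add]
      gcongr
      have : -(0.54 * u) + 0.54 * u * x / p = -(0.27 / p) * u := by
        rw [hx]; field_simp; ring
      rw [this]
      have : 0.27 / p ≤ r / p := by gcongr
      nlinarith
    have hs : |0.54 * u * x / p| ≤ 0.45 := by
      rw [abs_div, abs_mul, abs_of_pos p0, abs_of_pos (by positivity), div_le_iff₀ p0]
      nlinarith [abs_nonneg x]
    have := exp_quad hs
    calc p * exp (-(r / p) * u) ≤ p * (exp (-(0.54 * u)) *
          (1 + 0.54 * u * x / p + 0.6 * (0.54 * u * x / p) ^ 2)) := by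
            gcongr
            exact e.trans (by gcongr)
      _ = _ := by field_simp
  have k1 := key p x hx hp hx1
  have k2 := key q (-x) (by linarith) hq (by rwa [abs_neg])
  have hsum : p * exp (-(r / p) * u) + q * exp (-(r / q) * u) ≤ exp (-(0.54 * u)) *
      (1 + 0.6 * (0.54 * u * x) ^ 2 / (p * q)) := by
    refine (add_le_add k1 k2).trans_eq ?_
    have : (0.6 * (0.54 * u * x) ^ 2 / (p * q)) = 0.6 * (0.54 * u * x) ^ 2 / p
        + 0.6 * (0.54 * u * x) ^ 2 / q := by
      field_simp
      linear_combination (-x ^ 2) * hpq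
    rw [this, ← hpq]; ring
  have hlast : 1 + 0.6 * (0.54 * u * x) ^ 2 / (p * q) ≤ exp (0.04 * u) := by
    refine le_trans ?_ (add_one_le_exp _)
    have hx2 : x ^ 2 ≤ 1 / 36 := by
      rw [← sq_abs]; nlinarith [abs_nonneg x]
    have hpq2 : p * q = 1 / 4 - x ^ 2 := by
      have : q = 1 - p := by linarith
      rw [hx, this]; ring
    have : 0.6 * (0.54 * u * x) ^ 2 / (p * q) ≤ 0.04 * u := by
      rw [div_le_iff₀ (by positivity), hpq2]
      have a1 : u ^ 2 * x ^ 2 ≤ 1.5 * u * (1 / 36) := by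
        have : u ^ 2 ≤ 1.5 * u := by nlinarith
        gcongr
      nlinarith
    linarith
  calc _ ≤ _ := hsum
    _ ≤ exp (-(0.54 * u)) * exp (0.04 * u) := by gcongr
    _ = _ := by rw [← exp_add]; congr 1; ring

lemma LCD.cheb {ρ : ℝ → ℝ} (h : LCD ρ) {u : ℝ} (hu : 0 < u) :
    u ^ 2 * (tl ρ u + tl (fun x => ρ (-x)) u) ≤ 1 := by
  have i1 : Integrable ((Set.Ioi u).indicator ρ) := h.int0.indicator measurableSet_Ioi
  have i2 : Integrable ((Set.Iic (-u)).indicator ρ) := h.int0.indicator measurableSet_Iic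
  have e := integral_comp_neg_Ioi u ρ
  unfold tl
  rw [e, ← integral_indicator measurableSet_Ioi, ← integral_indicator measurableSet_Iic,
    ← integral_add i1 i2, ← integral_const_mul, ← h.var]
  refine integral_mono ((i1.add i2).const_mul _) h.int2 fun x => ?_
  have := h.nn x
  simp only [Set.indicator, Set.mem_Ioi, Set.mem_Iic]
  split_ifs with a b b
  · linarith
  · have : u ^ 2 ≤ x ^ 2 := by nlinarith
    simp; gcongr
  · have : u ^ 2 ≤ x ^ 2 := by nlinarith
    simp; gcongr
  · simp; positivity

lemma cheb_num {u : ℝ} (h1 : 1.5 ≤ u) (h2 : u ≤ 8) : exp (u / 2) ≤ u ^ 2 := by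
  have key : exp (u / 4) ≤ u := by
    have hc := convexOn_exp.2 (Set.mem_univ (1.5 / 4)) (Set.mem_univ (8 / 4))
      (by apply div_nonneg <;> linarith : 0 ≤ (8 - u) / 6.5)
      (by apply div_nonneg <;> linarith : 0 ≤ (u - 1.5) / 6.5) (by ring)
    simp only [smul_eq_mul] at hc
    have e : (8 - u) / 6.5 * (1.5 / 4) + (u - 1.5) / 6.5 * (8 / 4) = u / 4 := by ring
    rw [e] at hc
    have a1 : exp (1.5 / 4) ≤ 1.5 := by
      have := exp_quad (s := 1.5 / 4) (by rw [abs_of_pos (by norm_num)]; norm_num)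
      norm_num at this ⊢
      linarith
    have a2 : exp (8 / 4) ≤ 8 := by
      have e : exp (8 / 4) = exp 1 ^ 2 := by rw [← exp_nat_mul]; norm_num
      have := Real.exp_one_lt_d9
      have h0 := exp_pos 1
      rw [e]; nlinarith
    have b1 : (8 - u) / 6.5 * exp (1.5 / 4) ≤ (8 - u) / 6.5 * 1.5 :=
      mul_le_mul_of_nonneg_left a1 (by apply div_nonneg <;> linarith)
    have b2 : (u - 1.5) / 6.5 * exp (8 / 4) ≤ (u - 1.5) / 6.5 * 8 :=
      mul_le_mul_of_nonneg_left a2 (by apply div_nonneg <;> linarith)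
    have : (8 - u) / 6.5 * 1.5 + (u - 1.5) / 6.5 * 8 = u := by ring
    linarith
  calc exp (u / 2) = exp (u / 4) ^ 2 := by rw [← exp_nat_mul]; congr 1; push_cast; ring
    _ ≤ _ := by gcongr

lemma LCD.main {ρ : ℝ → ℝ} (h : LCD ρ) {u : ℝ} (hu : 1 ≤ u) :
    tl ρ u + tl (fun x => ρ (-x)) u ≤ exp (-(u / 2)) := by
  have hp := h.grunbaum
  have hq := h.refl.grunbaum
  have hs := h.tl_add
  rcases le_total u 1.5 with h1 | h1
  · have hr := h.low
    have hr' : 0 < ρ 0 := by linarith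
    have t1 := h.tangent 0 hr' (by linarith) u
    have t2 := h.refl.tangent 0 (by simpa using hr') (by linarith) u
    have := mid_num hs hp hq hr hu h1
    simp only [sub_zero, neg_zero] at t1 t2
    linarith
  rcases le_total u 8 with h2 | h2
  · have a := h.cheb (u := u) (by linarith)
    have b := cheb_num h1 h2
    have hn := add_nonneg (h.tl_nonneg u) (h.refl.tl_nonneg u)
    rw [exp_neg, ← one_div, le_div_iff₀ (exp_pos _), mul_comm]
    exact (mul_le_mul_of_nonneg_right b hn).trans a
  · have a := h.large h2
    have b := h.refl.large h2
    calc _ ≤ _ := add_le_add a b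
      _ = _ := by rw [← add_mul, hs, one_mul]

lemma lc_measurable {ρ : ℝ → ℝ} (nn : ∀ x, 0 ≤ ρ x)
    (lc : ∀ x y : ℝ, ∀ l : ℝ, 0 < l → l < 1 →
      ρ x ^ l * ρ y ^ (1 - l) ≤ ρ (l * x + (1 - l) * y)) : Measurable ρ := by
  refine measurable_of_Ici fun c => ?_
  refine Set.OrdConnected.measurableSet ⟨fun x hx z hz y hy => ?_⟩
  simp only [Set.mem_preimage, Set.mem_Ici] at *
  rcases le_or_gt c 0 with hc | hc
  · exact hc.trans (nn y)
  rcases hy.1.eq_or_lt with rfl | h1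
  · exact hx
  rcases hy.2.eq_or_lt with rfl | h2
  · exact hz
  obtain ⟨l, h0, hl1, rfl⟩ := mid_exists h1 h2
  refine le_trans ?_ (lc x z l h0 hl1)
  have e : c ^ l * c ^ (1 - l) = c := by rw [← rpow_add hc]; simp
  calc c = c ^ l * c ^ (1 - l) := e.symm
    _ ≤ _ := mul_le_mul (rpow_le_rpow hc.le hx h0.le) (rpow_le_rpow hc.le hz (by linarith))
      (by positivity) (rpow_nonneg (nn x) _)

/-- If `X` is log-concave with mean `0` and variance `γ²`,
then `P(|X| ≥ s) ≤ e^{-s/(2γ)}` for every `s ≥ γ`. -/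
theorem logconcave_tail_bound
    {Ω : Type*} [MeasureSpace Ω] [IsProbabilityMeasure (ℙ : Measure Ω)]
    (X : Ω → ℝ) (hX : Measurable X)
    (hlc : IsLogConcaveLaw ((ℙ : Measure Ω).map X))
    (hint : Integrable X ℙ) (hmean : ∫ ω, X ω ∂ℙ = 0)
    (γ : ℝ) (hγ : 0 ≤ γ) (hvar : ProbabilityTheory.variance X ℙ = γ ^ 2) :
    ∀ s : ℝ, γ ≤ s →
      (ℙ {ω | s ≤ |X ω|}).toReal ≤ Real.exp (-(s / (2 * γ))) := by
  intro s hs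
  rcases hγ.eq_or_lt with h0 | hγ0
  · rw [← h0]
    simp only [mul_zero, div_zero, neg_zero, exp_zero]
    exact measureReal_le_one
  obtain ⟨ρ, nn, hμ, lc⟩ := hlc
  have ρm := lc_measurable nn lc
  set μ := (ℙ : Measure Ω).map X with hμdef
  haveI : IsProbabilityMeasure μ := Measure.isProbabilityMeasure_map hX.aemeasurable
  have dm : Measurable (fun x => ENNReal.ofReal (ρ x)) := ρm.ennreal_ofReal
  have iiff : ∀ f : ℝ → ℝ, Integrable f μ ↔ Integrable (fun x => f x * ρ x) := by
    intro f
    rw [hμ, integrable_withDensity_iff dm (Filter.Eventually.of_forall fun x => ENNReal.ofReal_lt_top)]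
    simp only [ENNReal.toReal_ofReal (nn _)]
  have ieq : ∀ f : ℝ → ℝ, ∫ x, f x ∂μ = ∫ x, f x * ρ x := by
    intro f
    rw [hμ, integral_withDensity_eq_integral_toReal_smul dm
      (Filter.Eventually.of_forall fun x => ENNReal.ofReal_lt_top)]
    simp only [ENNReal.toReal_ofReal (nn _), smul_eq_mul, mul_comm]
  have hmem : MemLp X 2 ℙ := by
    by_contra hno
    have h1 := evariance_eq_top hX.aestronglyMeasurable hno
    have h2 : variance X ℙ = 0 := by simp [variance, h1]
    rw [hvar] at h2
    have : 0 < γ ^ 2 := by positivity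
    linarith
  have hsq : ∫ ω, X ω ^ 2 ∂ℙ = γ ^ 2 := by
    rw [← hvar, variance_of_integral_eq_zero hX.aemeasurable hmean]
  have j0 : Integrable ρ := by
    simpa using (iiff fun _ => 1).1 (integrable_const 1)
  have j1 : Integrable (fun x => x * ρ x) :=
    (iiff fun x => x).1 ((integrable_map_measure (by fun_prop) hX.aemeasurable).2 hint)
  have j2 : Integrable (fun x => x ^ 2 * ρ x) :=
    (iiff fun x => x ^ 2).1 ((integrable_map_measure (by fun_prop) hX.aemeasurable).2
      hmem.integrable_sq)
  have v0 : ∫ x, ρ x = 1 := by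
    have := ieq fun _ => 1
    simpa using this.symm
  have v1 : ∫ x, x * ρ x = 0 := by
    rw [← ieq (fun x => x), hμdef, integral_map hX.aemeasurable (by fun_prop)]
    exact hmean
  have v2 : ∫ x, x ^ 2 * ρ x = γ ^ 2 := by
    rw [← ieq (fun x => x ^ 2), hμdef, integral_map hX.aemeasurable (by fun_prop)]
    exact hsq
  have H : LCD (fun x => γ * ρ (γ * x)) := by
    refine ⟨fun x => mul_nonneg hγ (nn _), ?_, ?_, ?_, ?_, ?_, ?_, ?_⟩
    · intro x y l h0 h1
      rw [mul_rpow hγ (nn _), mul_rpow hγ (nn _)]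
      have e : γ ^ l * γ ^ (1 - l) = γ := by rw [← rpow_add hγ0]; simp
      have := lc (γ * x) (γ * y) l h0 h1
      have e2 : l * (γ * x) + (1 - l) * (γ * y) = γ * (l * x + (1 - l) * y) := by ring
      rw [e2] at this
      calc _ = (γ ^ l * γ ^ (1 - l)) * (ρ (γ * x) ^ l * ρ (γ * y) ^ (1 - l)) := by ring
        _ ≤ _ := by rw [e]; gcongr
    · exact (j0.comp_mul_left' hγ0.ne').const_mul γ
    · refine (j1.comp_mul_left' hγ0.ne').congr (Filter.Eventually.of_forall fun x => ?_)
      simp; ring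
    · refine ((j2.comp_mul_left' hγ0.ne').const_mul γ⁻¹).congr
        (Filter.Eventually.of_forall fun x => ?_)
      simp; field_simp
    · rw [integral_const_mul, Measure.integral_comp_mul_left, v0]
      simp [abs_of_pos hγ0, hγ0.ne']
    · have := Measure.integral_comp_mul_left (fun x => x * ρ x) γ
      rw [v1] at this
      rw [smul_zero] at this
      rw [← this]
      congr 1; ext x; ring
    · have := Measure.integral_comp_mul_left (fun x => x ^ 2 * ρ x) γ
      rw [v2] at this
      have e : (fun x => x ^ 2 * (γ * ρ (γ * x))) = fun x => γ⁻¹ * ((γ * x) ^ 2 * ρ (γ * x)) := by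
        ext x; field_simp
      rw [e, integral_const_mul, this, abs_of_pos (by positivity), smul_eq_mul]
      field_simp
  have hu : 1 ≤ s / γ := by rwa [one_le_div hγ0]
  have M := H.main hu
  have hs0 : 0 < s := by linarith
  -- identify the tails
  have T1 : tl (fun x => γ * ρ (γ * x)) (s / γ) = ∫ x in Set.Ioi s, ρ x := by
    unfold tl
    rw [integral_const_mul, integral_comp_mul_left_Ioi _ _ hγ0]
    simp [mul_div_cancel₀ _ hγ0.ne', hγ0.ne']
  have T2 : tl (fun x => γ * ρ (γ * -x)) (s / γ) = ∫ x in Set.Iic (-s), ρ x := by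
    unfold tl
    have := integral_comp_mul_left_Ioi (fun x => ρ (-x)) (s / γ) hγ0
    simp only [mul_neg]
    rw [integral_const_mul, this, mul_div_cancel₀ _ hγ0.ne', integral_comp_neg_Ioi]
    simp [hγ0.ne']
  rw [T1, T2] at M
  have hset : {ω | s ≤ |X ω|} = X ⁻¹' (Set.Ici s ∪ Set.Iic (-s)) := by
    ext ω
    simp [le_abs, le_neg]
  have hmu : ∀ A : Set ℝ, MeasurableSet A → μ A = ENNReal.ofReal (∫ x in A, ρ x) := by
    intro A hA
    rw [hμ, withDensity_apply _ hA,
      ofReal_integral_eq_lintegral_ofReal j0.integrableOn (Filter.Eventually.of_forall nn)]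
  have hd : Disjoint (Set.Ici s) (Set.Iic (-s)) := by
    rw [Set.disjoint_left]
    intro x h1 h2
    simp at h1 h2
    linarith
  rw [hset, ← Measure.map_apply hX (by measurability), ← hμdef, hmu _ (by measurability),
    ENNReal.toReal_ofReal (integral_nonneg nn),
    setIntegral_union hd measurableSet_Iic j0.integrableOn j0.integrableOn,
    integral_Ici_eq_integral_Ioi]
  have e : s / (2 * γ) = s / γ / 2 := by field_simp
  rw [e]
  exact M
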